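/- Under the Algorithm-3 exponential-weights setup, let j be an expert that enters at round s with initial weight w_s^{(j)} = 1/s (where 2 ≤ s), and suppose j belongs to S_τ for every τ ∈ {s, …, t} with t ≤ T. Then ∑_{τ=s}^{t} (ℓ_τ(x_τ) − ℓ_τ(x_τ^{(j)})) ≤ (2/α)·(log(t − s + 1) + log T). -/

import Mathlib

/-!
Exp-concavity bounds the loss of the played point by the mix loss `mₜ` of the experts, so it
suffices to bound `∑ (mₜ - ℓₜ(xₜʲ))`. An exponential-weights step multiplies the weight of expert
`j` by `exp (α (mₜ - ℓₜ(xₜʲ)))`, and the factor `1 - 1/(τ+1) = τ/(τ+1)` telescopes; hence, from a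
round `a` where the weight is `1/a`, the exponential of `α` times the accumulated regret up to `b`
is `b` times the updated weight of `j` in round `b`, which is at most `1`. So such a stretch costs
at most `log b / α`. The weight of `j` is reset to `1/j` in round `j`, which may fall inside the
interval and cut it in two; this accounts for the factor `2`.
-/

section

open Real Finset

section MixLoss

variable {ι : Type*}

/-- The mix loss `-α⁻¹ log ∑ᵢ wᵢ exp(-α lᵢ)` of experts `i ∈ A` with weights `w` and losses `l`:
the loss against which the exponential-weights update is measured. -/
noncomputable def mixLoss (α : ℝ) (A : Finset ι) (w l : ι → ℝ) : ℝ :=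
  -log (∑ i ∈ A, w i * exp (-α * l i)) / α

variable {α : ℝ} {A : Finset ι} {w l : ι → ℝ}

lemma exp_neg_mul_mixLoss (hα : α ≠ 0) (hw : ∀ i ∈ A, 0 ≤ w i) (hw_sum : ∑ i ∈ A, w i = 1) :
    exp (-α * mixLoss α A w l) = ∑ i ∈ A, w i * exp (-α * l i) := by
  have sum_pos : 0 < ∑ i ∈ A, w i * exp (-α * l i) :=
    (convex_Ioi (0 : ℝ)).sum_mem hw hw_sum fun i _ ↦ exp_pos (-α * l i)
  have exponent_eq : -α * mixLoss α A w l = log (∑ i ∈ A, w i * exp (-α * l i)) := by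
    rw [mixLoss]
    field_simp
  rw [exponent_eq, exp_log sum_pos]

lemma exp_mul_mixLoss_sub (hα : α ≠ 0) (hw : ∀ i ∈ A, 0 ≤ w i) (hw_sum : ∑ i ∈ A, w i = 1)
    (c : ℝ) :
    exp (α * (mixLoss α A w l - c)) = exp (-α * c) / ∑ i ∈ A, w i * exp (-α * l i) := by
  rw [← exp_neg_mul_mixLoss hα hw hw_sum, ← exp_sub]
  ring_nf

lemma mul_exp_mul_mixLoss_sub_le_one (hα : α ≠ 0) (hw : ∀ i ∈ A, 0 ≤ w i)
    (hw_sum : ∑ i ∈ A, w i = 1) {j : ι} (hj : j ∈ A) :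
    w j * exp (α * (mixLoss α A w l - l j)) ≤ 1 := by
  rw [exp_mul_mixLoss_sub hα hw hw_sum, ← mul_div_assoc]
  have term_nonneg : ∀ i ∈ A, 0 ≤ w i * exp (-α * l i) := fun i hi ↦
    mul_nonneg (hw i hi) (exp_nonneg _)
  exact div_le_one_of_le₀ (single_le_sum term_nonneg hj) (sum_nonneg term_nonneg)

lemma le_mixLoss_of_concaveOn_exp {E : Type*} [AddCommGroup E] [Module ℝ E] {K : Set E}
    {f : E → ℝ} {x : ι → E} (hα : 0 < α) (hf : ConcaveOn ℝ K fun y ↦ exp (-α * f y))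
    (hw : ∀ i ∈ A, 0 ≤ w i) (hw_sum : ∑ i ∈ A, w i = 1) (hx : ∀ i ∈ A, x i ∈ K) :
    f (∑ i ∈ A, w i • x i) ≤ mixLoss α A w fun i ↦ f (x i) := by
  have jensen : exp (-α * mixLoss α A w fun i ↦ f (x i)) ≤ exp (-α * f (∑ i ∈ A, w i • x i)) := by
    rw [exp_neg_mul_mixLoss hα.ne' hw hw_sum]
    exact hf.le_map_sum hw hw_sum hx
  exact (mul_le_mul_left_of_neg (neg_lt_zero.mpr hα)).mp (exp_le_exp.mp jensen)

end MixLoss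

section WeightRecursion

variable {v g : ℕ → ℝ} {a b : ℕ}

lemma natCast_mul_weight_eq_mul_exp_sum (hab : a ≤ b)
    (hv : ∀ τ ∈ Ico a b, v (τ + 1) = (1 - 1 / ((τ : ℝ) + 1)) * (v τ * exp (g τ))) :
    b * v b = a * v a * exp (∑ τ ∈ Ico a b, g τ) := by
  induction b, hab using Nat.le_induction with
  | base => simp
  | succ b hab ih =>
    have ih := ih fun τ hτ ↦ hv τ (Ico_subset_Ico_right b.le_succ hτ)
    calc ((b + 1 : ℕ) : ℝ) * v (b + 1)
        = b * v b * exp (g b) := by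
          rw [hv b (by simp [hab]), Nat.cast_succ]
          field_simp
          ring
      _ = a * v a * exp (∑ τ ∈ Ico a (b + 1), g τ) := by
          rw [ih, sum_Ico_succ_top hab, exp_add, mul_assoc]

lemma sum_le_log_of_weight_rec (ha : 0 < a) (hab : a ≤ b) (hva : v a = 1 / a)
    (hv : ∀ τ ∈ Ico a b, v (τ + 1) = (1 - 1 / ((τ : ℝ) + 1)) * (v τ * exp (g τ)))
    (hvb : v b * exp (g b) ≤ 1) :
    ∑ τ ∈ Icc a b, g τ ≤ log b := by
  have ha₀ : (a : ℝ) ≠ 0 := by positivity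
  have exp_sum_eq : exp (∑ τ ∈ Ico a b, g τ) = b * v b := by
    rw [natCast_mul_weight_eq_mul_exp_sum hab hv, hva, mul_one_div_cancel ha₀, one_mul]
  rw [le_log_iff_exp_le (Nat.cast_pos.mpr (ha.trans_le hab)), ← sum_Ico_add_eq_sum_Icc hab]
  calc exp (∑ τ ∈ Ico a b, g τ + g b)
      = b * (v b * exp (g b)) := by rw [exp_add, exp_sum_eq, mul_assoc]
    _ ≤ b := mul_le_of_le_one_right b.cast_nonneg hvb

lemma sum_le_two_mul_log_of_weight_reset {r : ℕ} (ha : 0 < a) (hab : a ≤ b) (hva : v a = 1 / a)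
    (hvr : r ∈ Ioc a b → v r = 1 / r)
    (hv : ∀ τ ∈ Ico a b, r ≠ τ + 1 → v (τ + 1) = (1 - 1 / ((τ : ℝ) + 1)) * (v τ * exp (g τ)))
    (hv_le : ∀ τ ∈ Icc a b, v τ * exp (g τ) ≤ 1) :
    ∑ τ ∈ Icc a b, g τ ≤ 2 * log b := by
  have sum_le_log {c e : ℕ} (hac : a ≤ c) (hce : c ≤ e) (heb : e ≤ b) (hvc : v c = 1 / c)
      (no_reset : r ∉ Ioc c e) : ∑ τ ∈ Icc c e, g τ ≤ log e := by
    refine sum_le_log_of_weight_rec (ha.trans_le hac) hce hvc (fun τ hτ ↦ ?_)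
      (hv_le e (mem_Icc.mpr ⟨hac.trans hce, heb⟩))
    refine hv τ (Ico_subset_Ico hac heb hτ) fun hr ↦ no_reset ?_
    rw [mem_Ico] at hτ
    exact mem_Ioc.mpr ⟨by omega, by omega⟩
  by_cases hr : r ∈ Ioc a b
  · obtain ⟨har, hrb⟩ := mem_Ioc.mp hr
    obtain ⟨m, rfl⟩ := Nat.exists_eq_succ_of_ne_zero har.ne_bot
    have ham : a ≤ m := Nat.le_of_lt_succ har
    have hm : 0 < m := ha.trans_le ham
    have hmb : m ≤ b := m.le_succ.trans hrb
    calc ∑ τ ∈ Icc a b, g τ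
        = ∑ τ ∈ Icc a m, g τ + ∑ τ ∈ Icc (m + 1) b, g τ := by
          simp only [← Ico_add_one_right_eq_Icc]
          exact (sum_Ico_consecutive g har.le (Nat.le_succ_of_le hrb)).symm
      _ ≤ log m + log b :=
          add_le_add (sum_le_log le_rfl ham hmb hva (by simp))
            (sum_le_log har.le hrb le_rfl (hvr hr) (by simp))
      _ ≤ log b + log b := by gcongr
      _ = 2 * log b := (two_mul _).symm
  · calc ∑ τ ∈ Icc a b, g τ
        ≤ log b := sum_le_log le_rfl hab le_rfl hva hr
      _ ≤ 2 * log b := le_mul_of_one_le_left (log_natCast_nonneg b) one_le_two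

end WeightRecursion

lemma log_le_log_sub_add_one_add_log {x y z : ℝ} (hy : 0 < y) (hxy : x ≤ y) (hyz : y ≤ z) :
    log y ≤ log (y - x + 1) + log z :=
  (log_le_log hy hyz).trans (le_add_of_nonneg_left (log_nonneg (by linarith)))

theorem eflh_expconcave_mw_regret_general {E : Type*} [AddCommGroup E] [Module ℝ E]
    {α : ℝ} (hα : 0 < α) {K : Set E} {ℓ : ℕ → E → ℝ} {S : ℕ → Finset ℕ} {xp : ℕ → ℕ → E}
    {w : ℕ → ℕ → ℝ} {X : ℕ → E} {s t j : ℕ}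
    (hℓ : ∀ τ ∈ Icc s t, ConcaveOn ℝ K fun x ↦ exp (-α * ℓ τ x))
    (hxp : ∀ τ, ∀ i ∈ S τ, xp τ i ∈ K)
    (hw_nonneg : ∀ τ, ∀ i ∈ S τ, 0 ≤ w τ i) (hw_sum : ∀ τ, ∑ i ∈ S τ, w τ i = 1)
    (hw_new : ∀ τ : ℕ, w (τ + 1) (τ + 1) = 1 / ((τ : ℝ) + 1))
    (hw_rec : ∀ τ : ℕ, ∀ i ∈ S τ, i ∈ S (τ + 1) → i ≠ τ + 1 →
      w (τ + 1) i = (1 - 1 / ((τ : ℝ) + 1)) *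
        (w τ i * exp (-α * ℓ τ (xp τ i)) / ∑ k ∈ S τ, w τ k * exp (-α * ℓ τ (xp τ k))))
    (hX : ∀ τ, X τ = ∑ i ∈ S τ, w τ i • xp τ i)
    (hs : 0 < s) (hst : s ≤ t) (hw_enter : w s j = 1 / (s : ℝ))
    (hactive : ∀ τ ∈ Icc s t, j ∈ S τ) :
    ∑ τ ∈ Icc s t, (ℓ τ (X τ) - ℓ τ (xp τ j)) ≤ 2 / α * log t := by
  let m (τ : ℕ) : ℝ := mixLoss α (S τ) (w τ) fun i ↦ ℓ τ (xp τ i)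
  have loss_le_mixLoss : ∀ τ ∈ Icc s t, ℓ τ (X τ) ≤ m τ := fun τ hτ ↦
    hX τ ▸ le_mixLoss_of_concaveOn_exp hα (hℓ τ hτ) (hw_nonneg τ) (hw_sum τ) (hxp τ)
  have weight_step : ∀ τ ∈ Ico s t, j ≠ τ + 1 → w (τ + 1) j =
      (1 - 1 / ((τ : ℝ) + 1)) * (w τ j * exp (α * (m τ - ℓ τ (xp τ j)))) := fun τ hτ hj ↦ by
    obtain ⟨hsτ, hτt⟩ := mem_Ico.mp hτ
    rw [hw_rec τ j (hactive τ (mem_Icc.mpr ⟨hsτ, hτt.le⟩))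
      (hactive (τ + 1) (mem_Icc.mpr ⟨Nat.le_succ_of_le hsτ, hτt⟩)) hj,
      exp_mul_mixLoss_sub hα.ne' (hw_nonneg τ) (hw_sum τ), mul_div_assoc]
  have reset : j ∈ Ioc s t → w j j = 1 / (j : ℝ) := fun hj ↦ by
    obtain ⟨τ, rfl⟩ := Nat.exists_eq_succ_of_ne_zero (mem_Ioc.mp hj).1.ne_bot
    exact_mod_cast hw_new τ
  have mixLoss_regret : ∑ τ ∈ Icc s t, α * (m τ - ℓ τ (xp τ j)) ≤ 2 * log t :=
    sum_le_two_mul_log_of_weight_reset (v := fun τ ↦ w τ j) hs hst hw_enter reset weight_step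
      fun τ hτ ↦ mul_exp_mul_mixLoss_sub_le_one hα.ne' (hw_nonneg τ) (hw_sum τ) (hactive τ hτ)
  calc ∑ τ ∈ Icc s t, (ℓ τ (X τ) - ℓ τ (xp τ j))
      ≤ ∑ τ ∈ Icc s t, (m τ - ℓ τ (xp τ j)) :=
        sum_le_sum fun τ hτ ↦ sub_le_sub_right (loss_le_mixLoss τ hτ) _
    _ ≤ 2 * log t / α := by rwa [le_div_iff₀' hα, mul_sum]
    _ = 2 / α * log t := mul_div_right_comm 2 (log t) α

end

/-- The multiplicative-weights regret bound `(2/α)(log I + log T)` for the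
exp-concave version of EFLH (Algorithm 3), proved in the appendix of the
paper and used in Lemma 6.2. -/
theorem eflh_expconcave_mw_regret
    (d T : ℕ) (hT : 2 ≤ T) (α : ℝ) (hα : 0 < α)
    (K : Set (EuclideanSpace ℝ (Fin d))) (hK : Convex ℝ K)
    (ℓ : ℕ → EuclideanSpace ℝ (Fin d) → ℝ)
    (hℓ : ∀ τ ∈ Finset.Icc 1 T, ConcaveOn ℝ K (fun x => Real.exp (-α * ℓ τ x)))
    -- active expert sets
    (S : ℕ → Finset ℕ)
    (hS_ne : ∀ τ, (S τ).Nonempty)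
    (hS_new : ∀ τ : ℕ, τ + 1 ∈ S (τ + 1))
    (hS_step : ∀ τ : ℕ, S (τ + 1) ⊆ S τ ∪ {τ + 1})
    -- expert predictions
    (xp : ℕ → ℕ → EuclideanSpace ℝ (Fin d))
    (hxp : ∀ τ, ∀ j ∈ S τ, xp τ j ∈ K)
    -- weights
    (w : ℕ → ℕ → ℝ)
    (hw_nonneg : ∀ τ, ∀ j ∈ S τ, 0 ≤ w τ j)
    (hw_sum : ∀ τ, ∑ j ∈ S τ, w τ j = 1)
    (hw_new : ∀ τ : ℕ, w (τ + 1) (τ + 1) = 1 / ((τ : ℝ) + 1))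
    (hw_rec : ∀ τ : ℕ, ∀ j ∈ S τ, j ∈ S (τ + 1) → j ≠ τ + 1 →
      w (τ + 1) j = (1 - 1 / ((τ : ℝ) + 1)) *
        (w τ j * Real.exp (-α * ℓ τ (xp τ j)) /
          ∑ i ∈ S τ, w τ i * Real.exp (-α * ℓ τ (xp τ i))))
    -- played points
    (X : ℕ → EuclideanSpace ℝ (Fin d))
    (hX : ∀ τ, X τ = ∑ j ∈ S τ, w τ j • xp τ j)
    -- the expert j entering at round s, alive throughout [s, t]
    (s t j : ℕ) (hs : 2 ≤ s) (hst : s ≤ t) (htT : t ≤ T)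
    (hw_enter : w s j = 1 / (s : ℝ))
    (hactive : ∀ τ ∈ Finset.Icc s t, j ∈ S τ) :
    ∑ τ ∈ Finset.Icc s t, (ℓ τ (X τ) - ℓ τ (xp τ j)) ≤
      2 / α * (Real.log ((t : ℝ) - (s : ℝ) + 1) + Real.log T) := by
  refine (eflh_expconcave_mw_regret_general hα
    (fun τ hτ ↦ hℓ τ (Finset.Icc_subset_Icc (by omega) htT hτ))
    hxp hw_nonneg hw_sum hw_new hw_rec hX (by omega) hst hw_enter hactive).trans ?_
  gcongr
  exact log_le_log_sub_add_one_add_log (by norm_cast; omega) (by gcongr) (by gcongr)
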